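/- arXiv:2504.00190 — 2 statements merged into one kernel-verified Lean document; each statement's English description precedes it below -/
import Mathlib

section
/- Let x₀ ∈ ℝ², r > 0, and let μ be a finite Borel measure on ℝ² that is supported in the closed ball of radius r centered at x₀ (i.e., μ(ℝ² \ closedBall(x₀, r)) = 0) and satisfies μ({x₀}) = 0. Then ∫ log( 3r / |y − x₀| ) dμ(y) ≤ (log 6) · Σ_{k=0}^{∞} μ( closedBall(x₀, 2^{-k} r) ), where both sides may be infinite. -/
open MeasureTheory Metric ENNReal

/-!
The sum on the right is the integral of the function counting the dyadic balls
`closedBall x₀ (2⁻ᵏ r)` that contain `y`. If `2ⁿ ≤ r / |y - x₀| < 2ⁿ⁺¹`, then `y` lies in those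
with `k = 0, …, n`, so the count is at least `n + 1`, while `3r / |y - x₀| ≤ 3 · 2ⁿ⁺¹ ≤ 6ⁿ⁺¹`.
Nothing changes when `3` and `2` are replaced by constants `a ≥ 1` and `b > 1`.
-/

lemma lintegral_tsum_indicator_one {X ι : Type*} [MeasurableSpace X] [Countable ι]
    {μ : Measure X} {s : ι → Set X} (hs : ∀ i, NullMeasurableSet (s i) μ) :
    ∫⁻ x, ∑' i, (s i).indicator 1 x ∂μ = ∑' i, μ (s i) := by
  rw [lintegral_tsum fun i => measurable_one.aemeasurable.indicator₀ (hs i)]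
  exact tsum_congr fun i => lintegral_indicator_one₀ (hs i)

lemma natCast_le_tsum_indicator_one {X : Type*} {s : ℕ → Set X} {x : X} {n : ℕ}
    (hx : ∀ k < n, x ∈ s k) : (n : ℝ≥0∞) ≤ ∑' k, (s k).indicator 1 x :=
  calc (n : ℝ≥0∞) = ∑ _k ∈ Finset.range n, 1 := by simp
    _ = ∑ k ∈ Finset.range n, (s k).indicator 1 x :=
      Finset.sum_congr rfl fun k hk =>
        (Set.indicator_of_mem (hx k (Finset.mem_range.1 hk)) 1).symm
    _ ≤ ∑' k, (s k).indicator 1 x := ENNReal.sum_le_tsum _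

lemma log_mul_le_mul_log_mul {a b t : ℝ} {n : ℕ} (ha : 1 ≤ a) (ht : 0 < t) (hn : n ≠ 0)
    (htb : t ≤ b ^ n) : Real.log (a * t) ≤ n * Real.log (a * b) := by
  have hpow : a * t ≤ (a * b) ^ n := calc
    a * t ≤ a ^ n * b ^ n := by
      gcongr
      exact le_self_pow₀ ha hn
    _ = (a * b) ^ n := (mul_pow a b n).symm
  calc Real.log (a * t) ≤ Real.log ((a * b) ^ n) := Real.log_le_log (by positivity) hpow
    _ = n * Real.log (a * b) := Real.log_pow _ _

lemma mem_closedBall_zpow_neg_mul_iff {X : Type*} [PseudoMetricSpace X] {x y : X} {b r : ℝ}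
    (hb : 0 < b) (k : ℤ) : y ∈ closedBall x (b ^ (-k) * r) ↔ b ^ k * dist y x ≤ r := by
  rw [mem_closedBall, zpow_neg, le_inv_mul_iff₀ (zpow_pos hb k)]

lemma ofReal_log_div_dist_le_mul_tsum_indicator {X : Type*} [PseudoMetricSpace X] {x y : X}
    {a b r : ℝ} (ha : 1 ≤ a) (hb : 1 < b) (hy : 0 < dist y x) (hyr : dist y x ≤ r) :
    ENNReal.ofReal (Real.log (a * r / dist y x)) ≤
      ENNReal.ofReal (Real.log (a * b)) *
        ∑' k : ℕ, (closedBall x (b ^ (-(k : ℤ)) * r)).indicator 1 y := by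
  obtain ⟨n, hn, hn'⟩ := exists_nat_pow_near ((one_le_div hy).2 hyr) hb
  have hmem : ∀ k < n + 1, y ∈ closedBall x (b ^ (-(k : ℤ)) * r) := by
    intro k hk
    rw [mem_closedBall_zpow_neg_mul_iff (one_pos.trans hb), zpow_natCast, ← le_div_iff₀ hy]
    exact (pow_le_pow_right₀ hb.le (Nat.le_of_lt_succ hk)).trans hn
  have hlog : Real.log (a * r / dist y x) ≤ (n + 1 : ℕ) * Real.log (a * b) := by
    rw [mul_div_assoc]
    exact log_mul_le_mul_log_mul ha (div_pos (hy.trans_le hyr) hy) n.succ_ne_zero hn'.le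
  calc ENNReal.ofReal (Real.log (a * r / dist y x))
      ≤ ENNReal.ofReal ((n + 1 : ℕ) * Real.log (a * b)) := ENNReal.ofReal_le_ofReal hlog
    _ = ENNReal.ofReal (Real.log (a * b)) * (n + 1 : ℕ) := by
      rw [ENNReal.ofReal_mul (Nat.cast_nonneg _), ENNReal.ofReal_natCast, mul_comm]
    _ ≤ ENNReal.ofReal (Real.log (a * b)) *
          ∑' k : ℕ, (closedBall x (b ^ (-(k : ℤ)) * r)).indicator 1 y := by
      gcongr
      exact natCast_le_tsum_indicator_one hmem

theorem log_potential_dyadic_bound_general {X : Type*} [PseudoMetricSpace X] [MeasurableSpace X]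
    [OpensMeasurableSpace X] {μ : Measure X} {x₀ : X} {a b r : ℝ} (ha : 1 ≤ a) (hb : 1 < b)
    (hsupp : μ (closedBall x₀ r)ᶜ = 0) (hcenter : μ (closedBall x₀ 0) = 0) :
    ∫⁻ y, ENNReal.ofReal (Real.log (a * r / dist y x₀)) ∂μ ≤
      ENNReal.ofReal (Real.log (a * b)) *
        ∑' k : ℕ, μ (closedBall x₀ (b ^ (-(k : ℤ)) * r)) := by
  have hball : ∀ᵐ y ∂μ, dist y x₀ ≤ r := hsupp
  have hpos : ∀ᵐ y ∂μ, 0 < dist y x₀ :=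
    (measure_eq_zero_iff_ae_notMem.1 hcenter).mono fun _ hy => not_le.1 hy
  calc ∫⁻ y, ENNReal.ofReal (Real.log (a * r / dist y x₀)) ∂μ
      ≤ ∫⁻ y, ENNReal.ofReal (Real.log (a * b)) *
          ∑' k : ℕ, (closedBall x₀ (b ^ (-(k : ℤ)) * r)).indicator 1 y ∂μ := by
        refine lintegral_mono_ae ?_
        filter_upwards [hball, hpos] with y hyr hy
        exact ofReal_log_div_dist_le_mul_tsum_indicator ha hb hy hyr
    _ = ENNReal.ofReal (Real.log (a * b)) *
          ∑' k : ℕ, μ (closedBall x₀ (b ^ (-(k : ℤ)) * r)) := by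
        rw [lintegral_const_mul' _ _ ENNReal.ofReal_ne_top,
          lintegral_tsum_indicator_one fun _ => measurableSet_closedBall.nullMeasurableSet]

/-- Let `x₀ ∈ ℝ²`, `r > 0`, and let `μ` be a finite Borel measure on `ℝ²`
supported in the closed ball of radius `r` about `x₀` with `μ({x₀}) = 0`. Then
`∫ log(3r/|y − x₀|) dμ(y) ≤ (log 6) · Σ_{k=0}^{∞} μ(closedBall(x₀, 2^{-k} r))`,
where both sides may be infinite. -/
theorem log_potential_dyadic_bound
    (x₀ : EuclideanSpace ℝ (Fin 2)) (r : ℝ) (hr : 0 < r)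
    (μ : Measure (EuclideanSpace ℝ (Fin 2))) [IsFiniteMeasure μ]
    (hsupp : μ (closedBall x₀ r)ᶜ = 0) (hpt : μ {x₀} = 0) :
    ∫⁻ y, ENNReal.ofReal (Real.log (3 * r / dist y x₀)) ∂μ ≤
      ENNReal.ofReal (Real.log 6) *
        ∑' k : ℕ, μ (closedBall x₀ ((2 : ℝ) ^ (-(k : ℤ)) * r)) := by
  rw [show (6 : ℝ) = 3 * 2 by norm_num]
  exact log_potential_dyadic_bound_general (by norm_num) one_lt_two hsupp (by rwa [closedBall_zero])
end

section
/- Let Ω ⊂ ℝ² be a bounded open set, let α ∈ (0, 1], K ≥ 0, C₁ ≥ 0, and let u : ℝ² → ℝ. Assume: (a) for every x₀ in the boundary ∂Ω and every t > 0, and all x, y ∈ Ω ∩ B_t(x₀), one has |u(x) − u(y)| ≤ K t^α; and (b) for every x ∈ Ω and r > 0 with B_{2r}(x) ⊆ Ω, and all y, z ∈ B_r(x), one has |u(y) − u(z)| ≤ C₁ r^{−α} · ( sup_{y', z' ∈ B_{2r}(x)} |u(y') − u(z')| ) · |y − z|^α. Then for all x, y ∈ Ω, |u(x) − u(y)| ≤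 4^α (1 + C₁) K |x − y|^α; that is, u is α-Hölder continuous on Ω with seminorm at most 4^α (1 + C₁) K. -/
open Metric Set

/-! If `x` is far from the boundary compared with `dist x y`, apply the interior estimate at half
the boundary distance of `x`. The supremum it involves is taken over a ball that lies in a
comparable ball around a boundary point, so the boundary decay controls it, and the powers of the
boundary distance cancel. Otherwise `x` and `y` already share a ball of radius `4 * dist x y` around
a boundary point. -/

lemma subset_of_isPreconnected_of_disjoint_frontier {X : Type*} [TopologicalSpace X] {s t : Set X}
    (ht : IsPreconnected t) (hts : (t ∩ s).Nonempty) (hd : Disjoint t (frontier s)) : t ⊆ s := by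
  have hcover : t ⊆ interior s ∪ interior sᶜ := by
    rw [← compl_frontier_eq_union_interior]
    exact hd.subset_compl_right
  have hint : (t ∩ interior s).Nonempty := by
    obtain ⟨x, hxt, hxs⟩ := hts
    exact ⟨x, hxt, (hcover hxt).resolve_right fun hx ↦ interior_subset hx hxs⟩
  have hdisj : Disjoint (interior s) (interior sᶜ) :=
    disjoint_compl_right.mono interior_subset interior_subset
  exact (ht.subset_left_of_subset_union isOpen_interior isOpen_interior hdisj hcover hint).trans
    interior_subset

lemma ball_infDist_frontier_subset {E : Type*} [SeminormedAddCommGroup E] [NormedSpace ℝ E]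
    {s : Set E} {x : E} (hx : x ∈ s) : ball x (infDist x (frontier s)) ⊆ s := by
  rcases infDist_nonneg.eq_or_lt' (a := infDist x (frontier s)) with h | h
  · simp [h]
  · exact subset_of_isPreconnected_of_disjoint_frontier (convex_ball x _).isPreconnected
      ⟨x, mem_ball_self h, hx⟩ disjoint_ball_infDist

lemma rpow_neg_mul_mul_rpow {c r : ℝ} (hc : 0 ≤ c) (hr : 0 < r) (α : ℝ) :
    r ^ (-α) * (c * r) ^ α = c ^ α := by
  rw [Real.mul_rpow hc hr.le, mul_left_comm, ← Real.rpow_add hr, neg_add_cancel, Real.rpow_zero,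
    mul_one]

section Estimates

variable {E F : Type*} [PseudoMetricSpace F]

/-- The boundary oscillation decay estimate: the oscillation of `u` over the part of `Ω` within
distance `t` of a boundary point is at most `K * t ^ α`. -/
def BoundaryOscillationDecay [PseudoMetricSpace E] (u : E → F) (Ω : Set E) (K α : ℝ) : Prop :=
  ∀ x₀ ∈ frontier Ω, ∀ t > (0 : ℝ), ∀ x ∈ Ω ∩ ball x₀ t, ∀ y ∈ Ω ∩ ball x₀ t,
    dist (u x) (u y) ≤ K * t ^ α

/-- The scale-invariant interior Hölder estimate: on balls `ball x r` whose double lies in `Ω`, the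
Hölder seminorm of `u` is at most `C * r ^ (-α)` times its oscillation over `ball x (2 * r)`.
Quantifying over the upper bounds `M` of that oscillation, instead of taking a real supremum, makes
the estimate void where the oscillation is infinite. -/
def InteriorHolderEstimate [PseudoMetricSpace E] (u : E → F) (Ω : Set E) (C α : ℝ) : Prop :=
  ∀ x ∈ Ω, ∀ r > (0 : ℝ), ball x (2 * r) ⊆ Ω →
    ∀ M, (∀ y ∈ ball x (2 * r), ∀ z ∈ ball x (2 * r), dist (u y) (u z) ≤ M) →
      ∀ y ∈ ball x r, ∀ z ∈ ball x r, dist (u y) (u z) ≤ C * r ^ (-α) * M * dist y z ^ α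

variable {u : E → F} {Ω : Set E} {C K α : ℝ}

lemma InteriorHolderEstimate.of_sSup [PseudoMetricSpace E] (hC : 0 ≤ C)
    (h : ∀ x ∈ Ω, ∀ r > (0 : ℝ), ball x (2 * r) ⊆ Ω → ∀ y ∈ ball x r, ∀ z ∈ ball x r,
      dist (u y) (u z) ≤ C * r ^ (-α) *
        sSup {d : ℝ | ∃ y' ∈ ball x (2 * r), ∃ z' ∈ ball x (2 * r), d = dist (u y') (u z')} *
          dist y z ^ α) :
    InteriorHolderEstimate u Ω C α := by
  intro x hx r hr hball M hM y hy z hz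
  have hx2r : x ∈ ball x (2 * r) := mem_ball_self (by positivity)
  refine (h x hx r hr hball y hy z hz).trans ?_
  gcongr
  refine csSup_le ⟨_, x, hx2r, x, hx2r, rfl⟩ ?_
  rintro _ ⟨y', hy', z', hz', rfl⟩
  exact hM y' hy' z' hz'

lemma BoundaryOscillationDecay.dist_le_of_mem_closedBall [PseudoMetricSpace E]
    (h : BoundaryOscillationDecay u Ω K α) (hne : (frontier Ω).Nonempty) {x y z : E} {s t : ℝ}
    (hst : infDist x (frontier Ω) + s < t) (hy : y ∈ Ω ∩ closedBall x s)
    (hz : z ∈ Ω ∩ closedBall x s) : dist (u y) (u z) ≤ K * t ^ α := by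
  obtain ⟨x₀, hx₀, hdist⟩ := (infDist_lt_iff hne).1 (lt_sub_iff_add_lt.2 hst)
  have hsub : closedBall x s ⊆ ball x₀ t := closedBall_subset_ball' (by linarith)
  have ht : 0 < t := pos_of_mem_ball (hsub hy.2)
  exact h x₀ hx₀ t ht y ⟨hy.1, hsub hy.2⟩ z ⟨hz.1, hsub hz.2⟩

lemma BoundaryOscillationDecay.dist_le_of_mem_ball_infDist [SeminormedAddCommGroup E]
    [NormedSpace ℝ E] (h : BoundaryOscillationDecay u Ω K α) {x y z : E} (hx : x ∈ Ω)
    (hy : y ∈ ball x (infDist x (frontier Ω))) (hz : z ∈ ball x (infDist x (frontier Ω))) :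
    dist (u y) (u z) ≤ K * (2 * infDist x (frontier Ω)) ^ α := by
  have hne : (frontier Ω).Nonempty := by
    by_contra! hempty
    simp [hempty] at hy
  -- The distance to the frontier need not be attained; the open ball leaves room for a boundary
  -- point that is only almost nearest.
  have hmax : max (dist y x) (dist z x) < infDist x (frontier Ω) := max_lt hy hz
  exact h.dist_le_of_mem_closedBall hne (x := x) (s := max (dist y x) (dist z x)) (by linarith)
    ⟨ball_infDist_frontier_subset hx hy, mem_closedBall.2 (le_max_left _ _)⟩
    ⟨ball_infDist_frontier_subset hx hz, mem_closedBall.2 (le_max_right _ _)⟩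

lemma InteriorHolderEstimate.dist_le_of_mem_ball_half_infDist [SeminormedAddCommGroup E]
    [NormedSpace ℝ E] (hint : InteriorHolderEstimate u Ω C α)
    (hbdry : BoundaryOscillationDecay u Ω K α) {x y z : E} (hx : x ∈ Ω)
    (hy : y ∈ ball x (infDist x (frontier Ω) / 2)) (hz : z ∈ ball x (infDist x (frontier Ω) / 2)) :
    dist (u y) (u z) ≤ 4 ^ α * C * K * dist y z ^ α := by
  set d := infDist x (frontier Ω)
  have hr : 0 < d / 2 := pos_of_mem_ball hy
  have hdouble : 2 * (d / 2) = d := by ring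
  have hosc : ∀ y' ∈ ball x (2 * (d / 2)), ∀ z' ∈ ball x (2 * (d / 2)),
      dist (u y') (u z') ≤ K * (2 * d) ^ α := by
    rw [hdouble]
    exact fun y' hy' z' hz' ↦ hbdry.dist_le_of_mem_ball_infDist hx hy' hz'
  have hball : ball x (2 * (d / 2)) ⊆ Ω := by
    rw [hdouble]
    exact ball_infDist_frontier_subset hx
  calc dist (u y) (u z)
      ≤ C * (d / 2) ^ (-α) * (K * (2 * d) ^ α) * dist y z ^ α :=
        hint x hx (d / 2) hr hball _ hosc y hy z hz
    _ = C * K * ((d / 2) ^ (-α) * (4 * (d / 2)) ^ α) * dist y z ^ α := by ring_nf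
    _ = 4 ^ α * C * K * dist y z ^ α := by
        rw [rpow_neg_mul_mul_rpow (by norm_num) hr]
        ring

end Estimates

theorem global_holder_from_boundary_and_interior_general {E F : Type*} [NormedAddCommGroup E]
    [NormedSpace ℝ E] [PseudoMetricSpace F] {u : E → F} {Ω : Set E} {C K α : ℝ} (hΩ : Ω ≠ univ)
    (hK : 0 ≤ K) (hbdry : BoundaryOscillationDecay u Ω K α)
    (hint : InteriorHolderEstimate u Ω C α) :
    ∀ x ∈ Ω, ∀ y ∈ Ω, dist (u x) (u y) ≤ 4 ^ α * max 1 C * K * dist x y ^ α := by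
  intro x hx y hy
  rcases eq_or_ne x y with rfl | hxy
  · rw [dist_self]
    positivity
  have hpos : 0 < dist x y := dist_pos.2 hxy
  have hne : (frontier Ω).Nonempty := nonempty_frontier_iff.2 ⟨⟨x, hx⟩, hΩ⟩
  rcases le_or_gt (infDist x (frontier Ω)) (2 * dist x y) with hnear | hfar
  · calc dist (u x) (u y)
        ≤ K * (4 * dist x y) ^ α :=
          hbdry.dist_le_of_mem_closedBall hne (x := x) (s := dist x y) (by linarith)
            ⟨hx, mem_closedBall_self hpos.le⟩ ⟨hy, mem_closedBall'.2 le_rfl⟩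
      _ = 4 ^ α * 1 * K * dist x y ^ α := by
          rw [Real.mul_rpow (by norm_num) hpos.le]
          ring
      _ ≤ 4 ^ α * max 1 C * K * dist x y ^ α := by gcongr; exact le_max_left _ _
  · calc dist (u x) (u y)
        ≤ 4 ^ α * C * K * dist x y ^ α :=
          hint.dist_le_of_mem_ball_half_infDist hbdry hx (mem_ball_self (by linarith))
            (mem_ball'.2 (by linarith))
      _ ≤ 4 ^ α * max 1 C * K * dist x y ^ α := by gcongr; exact le_max_right _ _

/-- Gluing a boundary oscillation estimate with interior Hölder estimates:
if `Ω ⊂ ℝ²` is bounded and open, `α ∈ (0,1]`, and `u` satisfies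
(a) `|u(x) − u(y)| ≤ K t^α` for all `x, y ∈ Ω ∩ B_t(x₀)` with `x₀ ∈ ∂Ω`, `t > 0`, and
(b) `|u(y) − u(z)| ≤ C₁ r^{−α} (sup_{y',z' ∈ B_{2r}(x)} |u(y') − u(z')|) |y − z|^α`
for all `y, z ∈ B_r(x)` whenever `B_{2r}(x) ⊆ Ω`,
then `|u(x) − u(y)| ≤ 4^α (1 + C₁) K |x − y|^α` for all `x, y ∈ Ω`. -/
theorem global_holder_from_boundary_and_interior
    (Ω : Set (EuclideanSpace ℝ (Fin 2))) (hΩb : Bornology.IsBounded Ω)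
    (hΩo : IsOpen Ω) (α : ℝ) (hα0 : 0 < α) (hα1 : α ≤ 1)
    (K C₁ : ℝ) (hK : 0 ≤ K) (hC₁ : 0 ≤ C₁)
    (u : EuclideanSpace ℝ (Fin 2) → ℝ)
    (hbdry : ∀ x₀ ∈ frontier Ω, ∀ t > (0 : ℝ),
      ∀ x ∈ Ω ∩ ball x₀ t, ∀ y ∈ Ω ∩ ball x₀ t,
        |u x - u y| ≤ K * t ^ α)
    (hint : ∀ x ∈ Ω, ∀ r > (0 : ℝ), ball x (2 * r) ⊆ Ω →
      ∀ y ∈ ball x r, ∀ z ∈ ball x r,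
        |u y - u z| ≤ C₁ * r ^ (-α) *
          sSup {d : ℝ | ∃ y' ∈ ball x (2 * r), ∃ z' ∈ ball x (2 * r),
            d = |u y' - u z'|} * dist y z ^ α) :
    ∀ x ∈ Ω, ∀ y ∈ Ω,
      |u x - u y| ≤ (4 : ℝ) ^ α * (1 + C₁) * K * dist x y ^ α := by
  have hΩ : Ω ≠ univ := by
    rintro rfl
    exact NormedSpace.unbounded_univ ℝ _ hΩb
  intro x hx y hy
  have hdecay : BoundaryOscillationDecay u Ω K α := hbdry
  have hholder : InteriorHolderEstimate u Ω C₁ α := .of_sSup hC₁ hint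
  refine (global_holder_from_boundary_and_interior_general hΩ hK hdecay hholder x hx y hy).trans ?_
  gcongr
  exact max_le (by linarith) (by linarith)
end
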